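/- Let T be a minimum spanning tree of G, let {i,j} be a nontree edge of G, and let r be an edge of maximum weight on the path P(T,i,j). Then the subgraph T_{i,j} obtained from T by removing the edge r and adding the edge {i,j} is a spanning tree of G containing {i,j}, and cost(T_{i,j}) ≤ cost(T') for every spanning tree T' of G that contains the edge {i,j}; i.e., T_{i,j} is a minimum spanning {i,j}-tree of G. -/

import Mathlib

open SimpleGraph

/-- `T` is a spanning tree of `G`: a connected acyclic (spanning) subgraph of `G`. -/
def IsSpanningTree {V : Type*} (G T : SimpleGraph V) : Prop :=
  T ≤ G ∧ T.IsTree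

/-- The cost of a graph: the sum of the weights of its edges. -/
noncomputable def cost {V : Type*} (w : Sym2 V → ℝ) (T : SimpleGraph V) : ℝ :=
  ∑ᶠ e ∈ T.edgeSet, w e

/-- `T` is a minimum spanning tree of `G` with respect to the weights `w`. -/
def IsMST {V : Type*} (G : SimpleGraph V) (w : Sym2 V → ℝ) (T : SimpleGraph V) : Prop :=
  IsSpanningTree G T ∧ ∀ T' : SimpleGraph V, IsSpanningTree G T' → cost w T ≤ cost w T'

theorem fromEdgeSet_exchange_eq {V : Type*} (T : SimpleGraph V) (e : Sym2 V) (u v : V) :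
    fromEdgeSet ((T.edgeSet \ {e}) ∪ {s(u, v)}) = T.deleteEdges {e} ⊔ fromEdgeSet {s(u, v)} := by
  rw [fromEdgeSet_union, deleteEdges, fromEdgeSet_sdiff, fromEdgeSet_edgeSet]

theorem mem_edgeSet_fromEdgeSet_exchange {V : Type*} (T : SimpleGraph V) (e : Sym2 V) {u v : V}
    (huv : u ≠ v) :
    s(u, v) ∈ (fromEdgeSet ((T.edgeSet \ {e}) ∪ {s(u, v)})).edgeSet := by
  simp [huv]

/-- Deleting an edge of a tree and joining the two resulting components gives a tree. -/
theorem SimpleGraph.IsTree.exchange {V : Type*} {T : SimpleGraph V} (hT : T.IsTree)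
    {e : Sym2 V} {u v : V} (h : ¬ (T.deleteEdges {e}).Reachable u v) :
    (fromEdgeSet ((T.edgeSet \ {e}) ∪ {s(u, v)})).IsTree := by
  have huv : u ≠ v := by rintro rfl; exact h (Reachable.refl _)
  rw [fromEdgeSet_exchange_eq]
  have hacyc : (T.deleteEdges {e} ⊔ fromEdgeSet {s(u, v)}).IsAcyclic :=
    (hT.isAcyclic.anti (deleteEdges_le _)).sup_edge_of_not_reachable h
  have hadj {x y : V} (hxy : T.Adj x y) :
      (T.deleteEdges {e} ⊔ fromEdgeSet {s(u, v)}).Reachable x y := by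
    by_cases hxe : s(x, y) = e
    · by_contra hnr
      have hsup := hacyc.sup_edge_of_not_reachable hnr
      have hle : T ⊔ fromEdgeSet {s(u, v)} ≤
          T.deleteEdges {e} ⊔ fromEdgeSet {s(u, v)} ⊔ edge x y := by
        intro a b hab
        by_cases hae : s(a, b) = e
        · right
          rw [← hxe] at hae
          rw [edge, fromEdgeSet_adj]
          exact ⟨hae, hab.ne⟩
        · left
          rcases hab with hab | hab
          · exact Or.inl (by simpa [deleteEdges_adj] using ⟨hab, hae⟩)
          · exact Or.inr hab
      rcases (isAcyclic_sup_fromEdgeSet_iff.mp (hsup.anti hle)).2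
        (hT.connected.preconnected u v) with h' | h'
      · exact huv h'
      · by_cases hue : s(u, v) = e
        · apply hnr
          refine Adj.reachable (Or.inr ?_)
          rw [fromEdgeSet_adj]
          exact ⟨hxe.trans hue.symm, hxy.ne⟩
        · exact h (Adj.reachable (by simpa [deleteEdges_adj] using ⟨h', hue⟩))
    · exact Adj.reachable (Or.inl (by simpa [deleteEdges_adj] using ⟨hxy, hxe⟩))
  have := hT.connected.nonempty
  refine ⟨⟨fun a b => ?_⟩, hacyc⟩
  obtain ⟨q⟩ := hT.connected.preconnected a b
  induction q with
  | nil => exact Reachable.refl _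
  | cons hxy _ ih => exact (hadj hxy).trans ih

theorem IsSpanningTree.exchange {V : Type*} {G T : SimpleGraph V} (hT : IsSpanningTree G T)
    {e : Sym2 V} {u v : V} (huv : G.Adj u v) (h : ¬ (T.deleteEdges {e}).Reachable u v) :
    IsSpanningTree G (fromEdgeSet ((T.edgeSet \ {e}) ∪ {s(u, v)})) := by
  refine ⟨?_, hT.2.exchange h⟩
  rw [fromEdgeSet_exchange_eq]
  refine sup_le ((deleteEdges_le _).trans hT.1) ?_
  rw [fromEdgeSet_le]
  rintro _ ⟨rfl, -⟩
  exact huv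

theorem cost_exchange {V : Type*} [Finite V] (w : Sym2 V → ℝ) {T : SimpleGraph V}
    {e : Sym2 V} (he : e ∈ T.edgeSet) {u v : V}
    (h : ¬ (T.deleteEdges {e}).Reachable u v) :
    cost w (fromEdgeSet ((T.edgeSet \ {e}) ∪ {s(u, v)})) + w e = cost w T + w s(u, v) := by
  have huv : u ≠ v := by rintro rfl; exact h (Reachable.refl _)
  have hnot : s(u, v) ∉ T.edgeSet \ {e} := fun hmem =>
    h (Adj.reachable (by simpa [deleteEdges_adj] using hmem))
  have hset : (fromEdgeSet ((T.edgeSet \ {e}) ∪ {s(u, v)})).edgeSet =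
      insert s(u, v) (T.edgeSet \ {e}) := by
    rw [edgeSet_fromEdgeSet, Set.union_singleton, sdiff_eq_left, Set.disjoint_left]
    rintro x (rfl | hx)
    · simpa using huv
    · exact T.not_isDiag_of_mem_edgeSet hx.1
  have hcost : cost w T = w e + ∑ᶠ f ∈ T.edgeSet \ {e}, w f := by
    rw [← finsum_mem_insert w (by simp) (Set.toFinite _), Set.insert_sdiff_singleton,
      Set.insert_eq_of_mem he, cost]
  rw [hcost, cost, hset, finsum_mem_insert w hnot (Set.toFinite _)]
  ring

/-- In an acyclic graph, deleting an edge of a path disconnects its endpoints. -/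
theorem SimpleGraph.IsAcyclic.not_reachable_deleteEdges_of_mem_edges {V : Type*}
    {T : SimpleGraph V} (hT : T.IsAcyclic) {i j : V} {p : T.Walk i j} (hp : p.IsPath)
    {r : Sym2 V} (hr : r ∈ p.edges) : ¬ (T.deleteEdges {r}).Reachable i j := by
  intro h
  obtain ⟨q, hq⟩ := h.exists_isPath
  have hle : T.deleteEdges {r} ≤ T := deleteEdges_le _
  have heq : p = q.mapLe hle :=
    congrArg Subtype.val ((hT.subsingleton_path i j).elim ⟨p, hp⟩ ⟨q.mapLe hle, hq.mapLe hle⟩)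
  rw [heq, Walk.edges_mapLe_eq_edges] at hr
  have := q.edges_subset_edgeSet hr
  simp at this

/-- Let `T` be an MST of `G`, `{i,j}` a nontree edge, `r` a maximum-weight edge on the
path `P(T,i,j)`. Then the graph `T_{i,j}` obtained from `T` by removing `r` and adding
`{i,j}` is a spanning tree of `G` containing `{i,j}`, of minimum cost among all spanning
trees of `G` containing `{i,j}`. -/
theorem mst_replacement_edge {V : Type*} [Fintype V]
    (G : SimpleGraph V) (hG : G.Connected) (w : Sym2 V → ℝ)
    (T : SimpleGraph V) (hT : IsMST G w T)
    (i j : V) (hij : G.Adj i j) (hnt : s(i, j) ∉ T.edgeSet)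
    (p : T.Walk i j) (hp : p.IsPath)
    (r : Sym2 V) (hr : r ∈ p.edges) (hrmax : ∀ f ∈ p.edges, w f ≤ w r) :
    IsSpanningTree G (fromEdgeSet ((T.edgeSet \ {r}) ∪ {s(i, j)})) ∧
    s(i, j) ∈ (fromEdgeSet ((T.edgeSet \ {r}) ∪ {s(i, j)})).edgeSet ∧
    ∀ T' : SimpleGraph V, IsSpanningTree G T' → s(i, j) ∈ T'.edgeSet →
      cost w (fromEdgeSet ((T.edgeSet \ {r}) ∪ {s(i, j)})) ≤ cost w T' := by
  have hrT : r ∈ T.edgeSet := p.edges_subset_edgeSet hr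
  have hnr := hT.1.2.isAcyclic.not_reachable_deleteEdges_of_mem_edges hp hr
  refine ⟨hT.1.exchange hij hnr, mem_edgeSet_fromEdgeSet_exchange T r hij.ne,
    fun T' hT' hijT' => ?_⟩
  have hbridge : ¬ (T'.deleteEdges {s(i, j)}).Reachable i j :=
    isBridge_iff.mp (isAcyclic_iff_forall_isBridge.mp hT'.2.isAcyclic hijT')
  obtain ⟨d, hd, hfst, hsnd⟩ := p.exists_boundary_dart
    {x | (T'.deleteEdges {s(i, j)}).Reachable i x} (Reachable.refl _) hbridge
  have hcross : ¬ (T'.deleteEdges {s(i, j)}).Reachable d.fst d.snd :=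
    fun h => hsnd (Reachable.trans hfst h)
  have hmax : w s(d.fst, d.snd) ≤ w r := hrmax _ (List.mem_map_of_mem hd)
  have hle := hT.2 _ (hT'.exchange (hT.1.1 d.adj) hcross)
  have hcost := cost_exchange w hrT hnr
  have hcost' := cost_exchange w hijT' hcross
  linarith
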